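/- Let p, q ≥ 1 and let ι : ℂ^{p+q} → ℓ²(ℕ, ℂ) be a ℂ-linear map satisfying Q_{p,∞}(ι(x), ι(y)) = Q_{p,q}(x, y) for all x, y ∈ ℂ^{p+q} (an embedding of 𝒳(p,q) into 𝒳(p,∞)). Then there exists a continuous ℂ-linear automorphism g of ℓ²(ℕ, ℂ) with continuous inverse such that Q_{p,∞}(g(u), g(v)) = Q_{p,∞}(u, v) for all u, v ∈ ℓ²(ℕ, ℂ) and g(ι(x)) = ι₀(x) for all x ∈ ℂ^{p+q}. In other words, every embedding of 𝒳(p,q) into 𝒳(p,∞) is obtained from the standard embedding by composing with an element of U(p,∞). -/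

import Mathlib

/-- The Hermitian form of signature `(p, ∞)` on `ℓ²(ℕ, ℂ)`. -/
noncomputable def QpInf (p : ℕ) (x y : lp (fun _ : ℕ => ℂ) 2) : ℂ :=
  ∑' i : ℕ, (if i < p then (1 : ℂ) else -1) * x i * (starRingEnd ℂ) (y i)

/-- The Hermitian form of signature `(p, q)` on `ℂ^{p+q}`. -/
noncomputable def Qpq (p q : ℕ) (x y : Fin (p + q) → ℂ) : ℂ :=
  ∑ i : Fin (p + q), (if i.1 < p then (1 : ℂ) else -1) * x i * (starRingEnd ℂ) (y i)

/-- The standard embedding `ι₀ : ℂ^{p+q} → ℓ²(ℕ, ℂ)`, sending the basis vector `E_i`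
to the basis vector `e_i` for `i = 0, …, p+q−1`. -/
noncomputable def stdEmb (p q : ℕ) (x : Fin (p + q) → ℂ) : lp (fun _ : ℕ => ℂ) 2 :=
  ∑ i : Fin (p + q), lp.single 2 (i : ℕ) (x i)

/-!
A vector `v` can be carried to any `e` with `B v v = B e e ≠ 0` by unitary quasi-reflections, which
are rank-one perturbations of the identity and hence homeomorphisms. The quasi-reflection along
`v - e` fixes every vector orthogonal to both `v` and `e`, so carrying the images of the basis
vectors to their targets one at a time never disturbs those already in place. This is Witt's
extension argument.
-/

open scoped ComplexConjugate lp

section Dilatransvection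

variable {R E : Type*} [CommRing R] [TopologicalSpace R] [AddCommGroup E] [Module R E]
  [TopologicalSpace E] [ContinuousAdd E] [ContinuousSMul R E]

/-- The map `x ↦ x + f x • v` as a homeomorphic linear automorphism: the continuous version of
`LinearEquiv.dilatransvection`. -/
noncomputable def continuousDilatransvection (f : StrongDual R E) (v : E) (h : IsUnit (1 + f v)) :
    E ≃L[R] E where
  __ := LinearEquiv.dilatransvection (f := f.toLinearMap) h
  continuous_toFun := continuous_id.add (f.continuous.smul continuous_const)
  continuous_invFun := continuous_id.add (f.continuous.smul continuous_const)

@[simp]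
theorem continuousDilatransvection_apply (f : StrongDual R E) (v : E) (h : IsUnit (1 + f v))
    (x : E) : continuousDilatransvection f v h x = x + f x • v :=
  LinearEquiv.dilatransvection.apply

end Dilatransvection

section Isometry

variable {𝕜 E : Type*} [Field 𝕜] [StarRing 𝕜] [AddCommGroup E] [Module 𝕜 E] [TopologicalSpace E]

/-- The group of homeomorphic linear automorphisms of `E` preserving the sesquilinear form `B`. For
the form of signature `(p, ∞)` on `ℓ²(ℕ, ℂ)` it is the group `U(p, ∞)`. -/
def isometryGroup (B : E →ₗ⋆[𝕜] E →ₗ[𝕜] 𝕜) : Subgroup (E ≃L[𝕜] E) where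
  carrier := {g | ∀ x y, B (g x) (g y) = B x y}
  one_mem' _ _ := rfl
  mul_mem' hg hh x y := (hg _ _).trans (hh x y)
  inv_mem' {g} hg x y := by
    rw [← hg (g⁻¹ x) (g⁻¹ y)]
    exact congr_arg₂ (B · ·) (g.apply_symm_apply x) (g.apply_symm_apply y)

theorem mem_isometryGroup_iff {B : E →ₗ⋆[𝕜] E →ₗ[𝕜] 𝕜} {g : E ≃L[𝕜] E} :
    g ∈ isometryGroup B ↔ ∀ x y, B (g x) (g y) = B x y :=
  Iff.rfl

end Isometry

section HermitianForm

variable {𝕜 E : Type*} [Field 𝕜] [StarRing 𝕜] [TopologicalSpace 𝕜] [ContinuousMul 𝕜]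
  [AddCommGroup E] [Module 𝕜 E] [TopologicalSpace E] [ContinuousAdd E] [ContinuousSMul 𝕜 E]
  {B : E →ₗ⋆[𝕜] E →ₗ[𝕜] 𝕜}

/-- These maps are the unitary quasi-reflections along `w`: the condition on `c` says that `w` is
multiplied by `-c⁻¹ * conj c`, a scalar of norm one for the involution. -/
theorem exists_mem_isometryGroup_forall_apply_eq_sub (hB : B.IsSymm) {w : E}
    (hw : Continuous (B w)) {c : 𝕜} (hc : c ≠ 0) (hcw : c + conj c = B w w) :
    ∃ g ∈ isometryGroup B, ∀ x, g x = x - (c⁻¹ * B w x) • w := by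
  have hc' : conj c ≠ 0 := (map_ne_zero _).2 hc
  have hunit : IsUnit (1 + (-c⁻¹ • (⟨B w, hw⟩ : StrongDual 𝕜 E)) w) := by
    have : 1 + -c⁻¹ * B w w = -c⁻¹ * conj c := by
      rw [← hcw]
      field_simp
      ring
    exact isUnit_iff_ne_zero.2 (this ▸ mul_ne_zero (neg_ne_zero.2 (inv_ne_zero hc)) hc')
  have happly (x : E) : continuousDilatransvection _ w hunit x = x - (c⁻¹ * B w x) • w := by
    simp [sub_eq_add_neg]
  refine ⟨continuousDilatransvection _ w hunit, fun x y ↦ ?_, happly⟩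
  have hxw : B x w = conj (B w x) := (hB.eq w x).symm
  simp only [happly, map_sub, map_smulₛₗ, LinearMap.sub_apply, LinearMap.smul_apply, map_mul,
    map_inv₀, smul_eq_mul, RingHom.id_apply, hxw, ← hcw]
  field_simp
  ring

theorem exists_mem_isometryGroup_apply_eq_of_sub_ne_zero (hB : B.IsSymm)
    (hBc : ∀ x, Continuous (B x)) {v e : E} (hve : B v v = B e e) (hne : B (v - e) v ≠ 0) :
    ∃ g ∈ isometryGroup B, g v = e ∧ ∀ x, B v x = 0 → B e x = 0 → g x = x := by
  have htrace : B (v - e) v + conj (B (v - e) v) = B (v - e) (v - e) := by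
    rw [hB.eq]
    simp only [map_sub, LinearMap.sub_apply]
    linear_combination hve
  obtain ⟨g, hg, hgx⟩ :=
    exists_mem_isometryGroup_forall_apply_eq_sub hB (hBc (v - e)) hne htrace
  refine ⟨g, hg, ?_, fun x hvx hex ↦ ?_⟩
  · rw [hgx, inv_mul_cancel₀ hne, one_smul, sub_sub_cancel]
  · simp [hgx, hvx, hex]

theorem exists_mem_isometryGroup_apply_eq [NeZero (2 : 𝕜)] (hB : B.IsSymm)
    (hBc : ∀ x, Continuous (B x)) {v e : E} (hve : B v v = B e e) (he : B e e ≠ 0) :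
    ∃ g ∈ isometryGroup B, g v = e ∧ ∀ x, B v x = 0 → B e x = 0 → g x = x := by
  by_cases hsub : B (v - e) v = 0
  · -- `v - e` and `v + e` cannot both be orthogonal to `v`, so `v` can be carried to `e` via `-e`.
    have h2 : 2 * B e e ≠ 0 := mul_ne_zero two_ne_zero he
    have hadd : B (v - -e) v ≠ 0 := by
      have : B (v - e) v + B (v - -e) v = 2 * B e e := by
        simp only [map_sub, map_neg, LinearMap.sub_apply, LinearMap.neg_apply]
        linear_combination 2 * hve
      rwa [← this, hsub, zero_add] at h2
    obtain ⟨g, hg, hgv, hgx⟩ :=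
      exists_mem_isometryGroup_apply_eq_of_sub_ne_zero hB hBc (by simpa using hve) hadd
    obtain ⟨k, hk, hke, hkx⟩ :=
      exists_mem_isometryGroup_apply_eq_of_sub_ne_zero hB hBc (v := -e) (e := e) (by simp)
        (by simpa [two_mul] using h2)
    refine ⟨k * g, mul_mem hk hg, (congr_arg k hgv).trans hke, fun x hvx hex ↦ ?_⟩
    have hnex : B (-e) x = 0 := by simp [hex]
    exact (congr_arg k (hgx x hvx hnex)).trans (hkx x hnex hex)
  · exact exists_mem_isometryGroup_apply_eq_of_sub_ne_zero hB hBc hve hsub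

theorem exists_mem_isometryGroup_forall_apply_eq [NeZero (2 : 𝕜)] (hB : B.IsSymm)
    (hBc : ∀ x, Continuous (B x)) {ι : Type*} [Finite ι] {v e : ι → E}
    (hve : ∀ i j, B (v i) (v j) = B (e i) (e j)) (horth : B.IsOrthoᵢ e)
    (hne : ∀ i, B (e i) (e i) ≠ 0) :
    ∃ g ∈ isometryGroup B, ∀ i, g (v i) = e i := by
  classical
  have := Fintype.ofFinite ι
  suffices ∀ s : Finset ι, ∃ g ∈ isometryGroup B, ∀ i ∈ s, g (v i) = e i by
    simpa using this Finset.univ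
  intro s
  induction s using Finset.induction_on with
  | empty => exact ⟨1, one_mem _, by simp⟩
  | insert k s hks ih =>
    obtain ⟨g, hg, hgv⟩ := ih
    obtain ⟨r, hr, hrk, hrx⟩ := exists_mem_isometryGroup_apply_eq hB hBc
      (v := g (v k)) (e := e k) ((hg _ _).trans (hve k k)) (hne k)
    refine ⟨r * g, mul_mem hr hg, Finset.forall_mem_insert _ _ _ |>.2 ⟨hrk, fun i hi ↦ ?_⟩⟩
    have hki : B (e k) (e i) = 0 := horth (ne_of_mem_of_not_mem hi hks).symm
    have hgki : B (g (v k)) (e i) = 0 := by rw [← hgv i hi, hg, hve, hki]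
    exact (congr_arg r (hgv i hi)).trans (hrx _ hgki hki)

theorem exists_mem_isometryGroup_comp_eq [NeZero (2 : 𝕜)] (hB : B.IsSymm)
    (hBc : ∀ x, Continuous (B x)) {V ι : Type*} [AddCommGroup V] [Module 𝕜 V] [Finite ι]
    (b : Module.Basis ι 𝕜 V) {f f₀ : V →ₗ[𝕜] E} (hf : ∀ x y, B (f x) (f y) = B (f₀ x) (f₀ y))
    (horth : B.IsOrthoᵢ (f₀ ∘ b)) (hne : ∀ i, B (f₀ (b i)) (f₀ (b i)) ≠ 0) :
    ∃ g ∈ isometryGroup B, g.toLinearMap ∘ₗ f = f₀ := by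
  obtain ⟨g, hg, hgb⟩ := exists_mem_isometryGroup_forall_apply_eq hB hBc
    (v := f ∘ b) (fun i j ↦ hf (b i) (b j)) horth hne
  exact ⟨g, hg, b.ext hgb⟩

end HermitianForm

section Signature

variable (p q : ℕ)

/-- The fundamental symmetry of signature `(p, ∞)`: the diagonal operator on `ℓ²(ℕ, ℂ)` whose first
`p` entries are `1` and whose other entries are `-1`. -/
noncomputable def signatureOp : ℓ²(ℕ, ℂ) →L[ℂ] ℓ²(ℕ, ℂ) :=
  lp.mapCLM 2 (fun i ↦ (if i < p then (1 : ℂ) else -1) • ContinuousLinearMap.id ℂ ℂ) zero_le_one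
    fun i ↦ by
      rw [norm_smul, apply_ite norm]
      simp

@[simp]
theorem signatureOp_apply (x : ℓ²(ℕ, ℂ)) (i : ℕ) :
    signatureOp p x i = (if i < p then (1 : ℂ) else -1) * x i := by
  rw [signatureOp, lp.mapCLM_apply_coe]
  split_ifs <;> simp

/-- The form `QpInf p` as a sesquilinear map. Mathlib's sesquilinear maps are conjugate-linear in
the first argument, so the arguments are swapped. -/
noncomputable def signatureForm : ℓ²(ℕ, ℂ) →ₗ⋆[ℂ] ℓ²(ℕ, ℂ) →ₗ[ℂ] ℂ :=
  (ContinuousLinearMap.toSesqForm (signatureOp p)).toLinearMap₁₂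

theorem signatureForm_apply (x y : ℓ²(ℕ, ℂ)) : signatureForm p y x = QpInf p x y := by
  simp [signatureForm, lp.inner_eq_tsum, QpInf]

theorem continuous_signatureForm (y : ℓ²(ℕ, ℂ)) : Continuous (signatureForm p y) :=
  (ContinuousLinearMap.toSesqForm (signatureOp p) y).continuous

theorem conj_QpInf (x y : ℓ²(ℕ, ℂ)) : conj (QpInf p x y) = QpInf p y x := by
  rw [QpInf, QpInf, Complex.conj_tsum]
  refine tsum_congr fun i ↦ ?_
  split_ifs <;> simp [mul_comm]

theorem isSymm_signatureForm : (signatureForm p).IsSymm :=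
  ⟨fun x y ↦ by simp only [signatureForm_apply, conj_QpInf]⟩

/-- The standard embedding `stdEmb p q` as a linear map. -/
noncomputable def stdEmbₗ : (Fin (p + q) → ℂ) →ₗ[ℂ] ℓ²(ℕ, ℂ) :=
  ∑ i : Fin (p + q), lp.lsingle 2 (i : ℕ) ∘ₗ LinearMap.proj i

theorem stdEmbₗ_apply (x : Fin (p + q) → ℂ) : stdEmbₗ p q x = stdEmb p q x := by
  simp [stdEmbₗ, stdEmb]

variable {p q}

theorem stdEmb_apply_fin (x : Fin (p + q) → ℂ) (i : Fin (p + q)) : stdEmb p q x i = x i := by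
  rw [stdEmb, lp.coeFn_sum, Finset.sum_apply]
  simp [Pi.single_apply, Fin.val_inj]

theorem stdEmb_apply_of_le (x : Fin (p + q) → ℂ) {k : ℕ} (hk : p + q ≤ k) :
    stdEmb p q x k = 0 := by
  have (i : Fin (p + q)) : k ≠ i := by lia
  rw [stdEmb, lp.coeFn_sum, Finset.sum_apply]
  simp [this]

theorem QpInf_stdEmb (x y : Fin (p + q) → ℂ) :
    QpInf p (stdEmb p q x) (stdEmb p q y) = Qpq p q x y := by
  rw [QpInf, tsum_eq_sum (s := Finset.range (p + q)), Finset.sum_range, Qpq]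
  · simp only [stdEmb_apply_fin]
  · intro k hk
    simp [stdEmb_apply_of_le x (by simpa using hk)]

theorem Qpq_single_left (i : Fin (p + q)) (y : Fin (p + q) → ℂ) :
    Qpq p q (Pi.single i 1) y = (if i.1 < p then 1 else -1) * conj (y i) := by
  simp [Qpq, Pi.single_apply]

end Signature

theorem stmt1 (p q : ℕ) (hp : 1 ≤ p) (hq : 1 ≤ q)
    (ι : (Fin (p + q) → ℂ) →ₗ[ℂ] lp (fun _ : ℕ => ℂ) 2)
    (hι : ∀ x y, QpInf p (ι x) (ι y) = Qpq p q x y) :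
    ∃ g : lp (fun _ : ℕ => ℂ) 2 ≃L[ℂ] lp (fun _ : ℕ => ℂ) 2,
      (∀ u v, QpInf p (g u) (g v) = QpInf p u v) ∧
      (∀ x, g (ι x) = stdEmb p q x) := by
  have hQ (x y) : signatureForm p (stdEmbₗ p q x) (stdEmbₗ p q y) = Qpq p q y x := by
    rw [signatureForm_apply, stdEmbₗ_apply, stdEmbₗ_apply, QpInf_stdEmb]
  have hisom (x y) :
      signatureForm p (ι x) (ι y) = signatureForm p (stdEmbₗ p q x) (stdEmbₗ p q y) := by
    rw [hQ, signatureForm_apply, hι]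
  let b := Pi.basisFun ℂ (Fin (p + q))
  have horth : (signatureForm p).IsOrthoᵢ (stdEmbₗ p q ∘ b) :=
    LinearMap.isOrthoᵢ_def.2 fun i j hij ↦ by simp [b, hQ, Qpq_single_left, hij]
  have hne (i) : signatureForm p (stdEmbₗ p q (b i)) (stdEmbₗ p q (b i)) ≠ 0 := by
    simp [b, hQ, Qpq_single_left, ite_eq_iff]
  obtain ⟨g, hg, hgι⟩ := exists_mem_isometryGroup_comp_eq (isSymm_signatureForm p)
    (continuous_signatureForm p) b hisom horth hne
  refine ⟨g, fun u v ↦ ?_, fun x ↦ ?_⟩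
  · simpa only [signatureForm_apply] using mem_isometryGroup_iff.1 hg v u
  · exact (LinearMap.congr_fun hgι x).trans (stdEmbₗ_apply p q x)
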